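/- arXiv:1209.3656 — 2 statements merged into one kernel-verified Lean document; each statement's English description precedes it below -/
import Mathlib

section
/- (i) For 0 ≤ k ≤ n − b − 1 one has α_k · α_k = α_0 (α_k is a‑nilpotent); for n − b ≤ k ≤ n − a − 1 one has α_k · α_k = α_k (α_k is idempotent); and for n − a ≤ k ≤ n one has α_k · α_k = α_n (α_k is b‑nilpotent). (ii) Each of the three sets N_a = {α_0,…,α_{n−b−1}}, Id_{a,b} = {α_{n−b},…,α_{n−a−1}} and N_b = {α_{n−a},…,α_n} is closed under the addition and the multiplication of STR{a,b}, i.e., is a subsemiring. -/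
/-- Pointwise-max addition on endomorphisms of the chain `Fin N`. -/
def sAdd {N : ℕ} (f g : Fin N → Fin N) : Fin N → Fin N := fun i => max (f i) (g i)

/-- Multiplication in diagram order: `(f·g)(i) = g (f i)`. -/
def sMul {N : ℕ} (f g : Fin N → Fin N) : Fin N → Fin N := fun i => g (f i)

/-- The element `α_k` of the string `STR{a,b}`: `α_k i = a` if `i ≤ N - k - 1`
    (equivalently `i + k < N`) and `α_k i = b` otherwise. -/
def alpha {N : ℕ} (a b : Fin N) (k : ℕ) : Fin N → Fin N :=
  fun i => if (i : ℕ) + k < N then a else b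

/-- The subset `{α_k : lo ≤ k ≤ hi}` of the string `STR{a,b}`. -/
def strRange {N : ℕ} (a b : Fin N) (lo hi : ℕ) : Set (Fin N → Fin N) :=
  {f | ∃ k, lo ≤ k ∧ k ≤ hi ∧ f = alpha a b k}

/-!
Multiplying `α_j` on the right by `g` only changes the two values: `α_j · g` takes `g a` where `α_j`
takes `a`, and `g b` where `α_j` takes `b`. So `α_j · α_k` is determined by the pair
`(α_k a, α_k b)`, which is `(a, a)`, `(a, b)` or `(b, b)` according to where the jump `n - k` of
`α_k` lies relative to `a ≤ b`; the three products are `α_0`, `α_j` and `α_n` respectively.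
-/

/-- For a set of monotone maps, being a subsemiring of the endomorphism semiring of the chain, in
the sense of closure under both operations: no neutral element is required to belong to `S`. -/
def IsSubsemiring {n : ℕ} (S : Set (Fin n → Fin n)) : Prop :=
  ∀ f ∈ S, ∀ g ∈ S, sAdd f g ∈ S ∧ sMul f g ∈ S

section

variable {n : ℕ} {a b : Fin n} {j k lo hi : ℕ}

theorem alpha_apply_of_lt {i : Fin n} (h : (i : ℕ) + k < n) : alpha a b k i = a :=
  if_pos h

theorem alpha_apply_of_le {i : Fin n} (h : n ≤ (i : ℕ) + k) : alpha a b k i = b :=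
  if_neg h.not_gt

theorem alpha_self (a : Fin n) (k : ℕ) : alpha a a k = Function.const (Fin n) a :=
  funext fun _ => ite_self a

theorem alpha_zero (a b : Fin n) : alpha a b 0 = Function.const (Fin n) a :=
  funext fun i => alpha_apply_of_lt i.isLt

theorem alpha_size (a b : Fin n) : alpha a b n = Function.const (Fin n) b :=
  funext fun i => alpha_apply_of_le (Nat.le_add_left n i)

theorem monotone_alpha (hab : a ≤ b) : Monotone (alpha a b) := by
  intro j k hjk i
  rcases lt_or_ge ((i : ℕ) + k) n with hk | hk
  · rw [alpha_apply_of_lt hk, alpha_apply_of_lt (by omega)]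
  · rw [alpha_apply_of_le hk]
    exact (ite_le_sup a b _).trans_eq (sup_of_le_right hab)

theorem sAdd_alpha_alpha (hab : a ≤ b) (j k : ℕ) :
    sAdd (alpha a b j) (alpha a b k) = alpha a b (max j k) :=
  ((monotone_alpha hab).map_sup j k).symm

theorem sMul_alpha_left (a b : Fin n) (k : ℕ) (g : Fin n → Fin n) :
    sMul (alpha a b k) g = alpha (g a) (g b) k :=
  funext fun _ => apply_ite g _ a b

theorem sMul_alpha_alpha_eq_alpha_zero (hab : a ≤ b) (j : ℕ) (hb : (b : ℕ) + k < n) :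
    sMul (alpha a b j) (alpha a b k) = alpha a b 0 := by
  have ha : (a : ℕ) + k < n := by omega
  rw [sMul_alpha_left, alpha_apply_of_lt ha, alpha_apply_of_lt hb, alpha_self, alpha_zero]

theorem sMul_alpha_alpha_eq_left (j : ℕ) (ha : (a : ℕ) + k < n) (hb : n ≤ (b : ℕ) + k) :
    sMul (alpha a b j) (alpha a b k) = alpha a b j := by
  rw [sMul_alpha_left, alpha_apply_of_lt ha, alpha_apply_of_le hb]

theorem sMul_alpha_alpha_eq_alpha_size (hab : a ≤ b) (j : ℕ) (ha : n ≤ (a : ℕ) + k) :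
    sMul (alpha a b j) (alpha a b k) = alpha a b n := by
  have hb : n ≤ (b : ℕ) + k := by omega
  rw [sMul_alpha_left, alpha_apply_of_le ha, alpha_apply_of_le hb, alpha_self, alpha_size]

theorem sAdd_mem_strRange (hab : a ≤ b) {f g : Fin n → Fin n} (hf : f ∈ strRange a b lo hi)
    (hg : g ∈ strRange a b lo hi) : sAdd f g ∈ strRange a b lo hi := by
  obtain ⟨j, hlj, hjh, rfl⟩ := hf
  obtain ⟨k, -, hkh, rfl⟩ := hg
  exact ⟨max j k, le_max_of_le_left hlj, max_le hjh hkh, sAdd_alpha_alpha hab j k⟩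

theorem isSubsemiring_strRange_zero (hab : a ≤ b) (hb : (b : ℕ) + hi < n) :
    IsSubsemiring (strRange a b 0 hi) := by
  refine fun f hf g hg => ⟨sAdd_mem_strRange hab hf hg, ?_⟩
  obtain ⟨j, -, -, rfl⟩ := hf
  obtain ⟨k, -, hk, rfl⟩ := hg
  exact ⟨0, le_rfl, hi.zero_le, sMul_alpha_alpha_eq_alpha_zero hab j (by omega)⟩

theorem isSubsemiring_strRange_of_le_of_lt (hab : a ≤ b) (hb : n ≤ (b : ℕ) + lo)
    (ha : (a : ℕ) + hi < n) : IsSubsemiring (strRange a b lo hi) := by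
  refine fun f hf g hg => ⟨sAdd_mem_strRange hab hf hg, ?_⟩
  obtain ⟨j, hlj, hjh, rfl⟩ := hf
  obtain ⟨k, hlk, hkh, rfl⟩ := hg
  exact ⟨j, hlj, hjh, sMul_alpha_alpha_eq_left j (by omega) (by omega)⟩

theorem isSubsemiring_strRange_size (hab : a ≤ b) (ha : n ≤ (a : ℕ) + lo) :
    IsSubsemiring (strRange a b lo n) := by
  refine fun f hf g hg => ⟨sAdd_mem_strRange hab hf hg, ?_⟩
  obtain ⟨j, hlj, hjn, rfl⟩ := hf
  obtain ⟨k, hlk, -, rfl⟩ := hg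
  exact ⟨n, hlj.trans hjn, le_rfl, sMul_alpha_alpha_eq_alpha_size hab j (by omega)⟩

end

/-- (i) `α_k · α_k = α_0` for `0 ≤ k ≤ n−b−1` (a-nilpotency),
`α_k · α_k = α_k` for `n−b ≤ k ≤ n−a−1` (idempotency), and `α_k · α_k = α_n`
for `n−a ≤ k ≤ n` (b-nilpotency). (ii) each of the sets
`N_a = {α_0,…,α_{n−b−1}}`, `Id_{a,b} = {α_{n−b},…,α_{n−a−1}}`,
`N_b = {α_{n−a},…,α_n}` is closed under addition and multiplication. -/
theorem stmt2 (n : ℕ) (a b : Fin n) (hab : a < b) :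
    (∀ k : ℕ, k ≤ n - (b : ℕ) - 1 →
      sMul (alpha a b k) (alpha a b k) = alpha a b 0) ∧
    (∀ k : ℕ, n - (b : ℕ) ≤ k → k ≤ n - (a : ℕ) - 1 →
      sMul (alpha a b k) (alpha a b k) = alpha a b k) ∧
    (∀ k : ℕ, n - (a : ℕ) ≤ k → k ≤ n →
      sMul (alpha a b k) (alpha a b k) = alpha a b n) ∧
    (∀ f ∈ strRange a b 0 (n - (b : ℕ) - 1), ∀ g ∈ strRange a b 0 (n - (b : ℕ) - 1),
      sAdd f g ∈ strRange a b 0 (n - (b : ℕ) - 1) ∧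
      sMul f g ∈ strRange a b 0 (n - (b : ℕ) - 1)) ∧
    (∀ f ∈ strRange a b (n - (b : ℕ)) (n - (a : ℕ) - 1),
      ∀ g ∈ strRange a b (n - (b : ℕ)) (n - (a : ℕ) - 1),
      sAdd f g ∈ strRange a b (n - (b : ℕ)) (n - (a : ℕ) - 1) ∧
      sMul f g ∈ strRange a b (n - (b : ℕ)) (n - (a : ℕ) - 1)) ∧
    (∀ f ∈ strRange a b (n - (a : ℕ)) n, ∀ g ∈ strRange a b (n - (a : ℕ)) n,
      sAdd f g ∈ strRange a b (n - (a : ℕ)) n ∧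
      sMul f g ∈ strRange a b (n - (a : ℕ)) n) := by
  have hab' : a ≤ b := hab.le
  refine ⟨fun k hk => ?a_nilpotent, fun k hbk hka => ?idempotent, fun k hak _ => ?b_nilpotent,
    ?subsemiring_a, ?subsemiring_id, ?subsemiring_b⟩
  case a_nilpotent => exact sMul_alpha_alpha_eq_alpha_zero hab' k (by omega)
  case idempotent => exact sMul_alpha_alpha_eq_left k (by omega) (by omega)
  case b_nilpotent => exact sMul_alpha_alpha_eq_alpha_size hab' k (by omega)
  case subsemiring_a => exact isSubsemiring_strRange_zero hab' (by omega)
  case subsemiring_id => exact isSubsemiring_strRange_of_le_of_lt hab' (by omega) (by omega)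
  case subsemiring_b => exact isSubsemiring_strRange_size hab' (by omega)
end

section
/- The maps δ_{α_0}, …, δ_{α_{n−a}} on STR{a,b} satisfy the following composition table: (i) δ_{α_ℓ} = δ_{α_{n−a}} for all n − a ≤ ℓ ≤ n; (ii) δ_{α_{n−b}} is a neutral element: δ_{α_{n−b}} ∘ δ_{α_ℓ} = δ_{α_ℓ} ∘ δ_{α_{n−b}} = δ_{α_ℓ} for all 0 ≤ ℓ ≤ n − a; (iii) δ_{α_{n−a}} is absorbing: δ_{α_{n−a}} ∘ δ_{α_ℓ} = δ_{α_ℓ} ∘ δ_{α_{n−a}} = δ_{α_{n−a}} for all 0 ≤ ℓ ≤ n − a; (iv) δ_{α_k} ∘ δ_{α_ℓ} = δ_{α_0} whenever 0 ≤ k, ℓ ≤ n − b − 1; (v) δ_{α_k} ∘ δ_{α_ℓ} = δ_{α_ℓ} ∘ δ_{α_k} = δ_{α_k} whenever 0 ≤ k ≤ n − b − 1 and n − b ≤ ℓ ≤ n − a − 1; (vi) δ_{α_k} ∘ δ_{α_ℓ} = δ_{α_ℓ} ∘ δ_{α_k} = δ_{α_ℓ} whenever n − b ≤ k ≤ ℓ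 ≤ n − a − 1. In particular the set Δ = {δ_{α_0}, …, δ_{α_{n−a}}} is closed under composition, composition on Δ is commutative, δ_{α_{n−b}} is an identity and δ_{α_{n−a}} an absorbing element of Δ. -/
/-- The Jordan-type map `δ_α(β) = α·β + β·α`. -/
def delta {N : ℕ} (α f : Fin N → Fin N) : Fin N → Fin N :=
  sAdd (sMul α f) (sMul f α)

/-! Call an index `k` low if `b + k < n`, middle if `a + k < n ≤ b + k`, and high if `n ≤ a + k`:
then `α_k` maps both `a` and `b` to `a`, fixes both, or maps both to `b`, respectively. This
determines the Jordan product `δ_α(β) = α·β + β·α` on the string: a high element times anything is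
`α_n`, two low elements multiply to `α_0`, a middle element fixes every low one, and two middle
elements multiply to their maximum. This product is commutative and associative, whence
`δ_α ∘ δ_β = δ_{δ_α(β)}`, so the composition table of the `δ_α` is the multiplication table of the
product, with all high indices identified. -/

theorem delta_comm {n : ℕ} (f g : Fin n → Fin n) : delta f g = delta g f :=
  funext fun _ => max_comm _ _

section StringOfTypeTwo

variable {n : ℕ} {a b : Fin n} {k l m : ℕ}

theorem alpha_low_or_middle_or_high (a b : Fin n) (k : ℕ) :
    b + k < n ∨ (a + k < n ∧ n ≤ b + k) ∨ n ≤ a + k := by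
  omega

theorem alpha_of_lt {i : Fin n} (h : i + k < n) : alpha a b k i = a :=
  if_pos h

theorem alpha_of_le {i : Fin n} (h : n ≤ i + k) : alpha a b k i = b :=
  if_neg h.not_gt

theorem sAdd_alpha (hab : a ≤ b) (k l : ℕ) :
    sAdd (alpha a b k) (alpha a b l) = alpha a b (max k l) := by
  funext i
  simp only [sAdd, alpha]
  split_ifs <;> first | omega | simp [hab]

theorem sMul_alpha_low (hab : a ≤ b) (k : ℕ) (hl : b + l < n) :
    sMul (alpha a b k) (alpha a b l) = alpha a b 0 := by
  have hal : a + l < n := by omega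
  funext i
  rw [alpha_of_lt (k := 0) i.isLt, sMul]
  rcases lt_or_ge (i + k) n with hi | hi
  · rw [alpha_of_lt hi, alpha_of_lt hal]
  · rw [alpha_of_le hi, alpha_of_lt hl]

theorem sMul_alpha_middle (k : ℕ) (hal : a + l < n) (hbl : n ≤ b + l) :
    sMul (alpha a b k) (alpha a b l) = alpha a b k := by
  funext i
  rw [sMul]
  rcases lt_or_ge (i + k) n with hi | hi
  · rw [alpha_of_lt hi, alpha_of_lt hal]
  · rw [alpha_of_le hi, alpha_of_le hbl]

theorem sMul_alpha_high (hab : a ≤ b) (k : ℕ) (hl : n ≤ a + l) :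
    sMul (alpha a b k) (alpha a b l) = alpha a b n := by
  have hbl : n ≤ b + l := by omega
  funext i
  rw [alpha_of_le (k := n) (Nat.le_add_left n i), sMul]
  rcases lt_or_ge (i + k) n with hi | hi
  · rw [alpha_of_lt hi, alpha_of_le hl]
  · rw [alpha_of_le hi, alpha_of_le hbl]

theorem exists_sMul_alpha_eq (hab : a ≤ b) (k l : ℕ) :
    ∃ m, sMul (alpha a b k) (alpha a b l) = alpha a b m := by
  rcases alpha_low_or_middle_or_high a b l with hl | ⟨hal, hbl⟩ | hl
  · exact ⟨0, sMul_alpha_low hab k hl⟩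
  · exact ⟨k, sMul_alpha_middle k hal hbl⟩
  · exact ⟨n, sMul_alpha_high hab k hl⟩

theorem exists_delta_alpha_eq (hab : a ≤ b) (k l : ℕ) :
    ∃ m, delta (alpha a b k) (alpha a b l) = alpha a b m := by
  obtain ⟨p, hp⟩ := exists_sMul_alpha_eq hab k l
  obtain ⟨q, hq⟩ := exists_sMul_alpha_eq hab l k
  exact ⟨max p q, by rw [delta, hp, hq, sAdd_alpha hab]⟩

theorem delta_alpha_low_low (hab : a ≤ b) (hk : b + k < n) (hl : b + l < n) :
    delta (alpha a b k) (alpha a b l) = alpha a b 0 := by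
  rw [delta, sMul_alpha_low hab k hl, sMul_alpha_low hab l hk, sAdd_alpha hab, max_self]

theorem delta_alpha_low_middle (hab : a ≤ b) (hk : b + k < n) (hal : a + l < n)
    (hbl : n ≤ b + l) :
    delta (alpha a b k) (alpha a b l) = alpha a b k := by
  rw [delta, sMul_alpha_middle k hal hbl, sMul_alpha_low hab l hk, sAdd_alpha hab, Nat.max_zero]

theorem delta_alpha_middle_middle (hab : a ≤ b) (hak : a + k < n) (hbk : n ≤ b + k)
    (hal : a + l < n) (hbl : n ≤ b + l) :
    delta (alpha a b k) (alpha a b l) = alpha a b (max k l) := by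
  rw [delta, sMul_alpha_middle k hal hbl, sMul_alpha_middle l hak hbk, sAdd_alpha hab]

theorem alpha_le (hab : a ≤ b) (k : ℕ) (i : Fin n) : alpha a b k i ≤ b := by
  rw [alpha]
  split_ifs
  exacts [hab, le_rfl]

theorem delta_alpha_high (hab : a ≤ b) (hk : n ≤ a + k) (l : ℕ) :
    delta (alpha a b k) (alpha a b l) = alpha a b n := by
  rw [delta, sMul_alpha_high hab l hk]
  funext i
  rw [sAdd, alpha_of_le (Nat.le_add_left n i)]
  exact max_eq_right (alpha_le hab l _)

theorem delta_alpha_assoc (hab : a ≤ b) (k l m : ℕ) :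
    delta (delta (alpha a b k) (alpha a b l)) (alpha a b m) =
      delta (alpha a b k) (delta (alpha a b l) (alpha a b m)) := by
  rcases alpha_low_or_middle_or_high a b k with hk | hk | hk <;>
  rcases alpha_low_or_middle_or_high a b l with hl | hl | hl <;>
  rcases alpha_low_or_middle_or_high a b m with hm | hm | hm <;>
  grind [delta_comm, delta_alpha_low_low, delta_alpha_low_middle, delta_alpha_middle_middle,
    delta_alpha_high]

theorem delta_alpha_left_comm (hab : a ≤ b) (k l m : ℕ) :
    delta (alpha a b k) (delta (alpha a b l) (alpha a b m)) =
      delta (alpha a b l) (delta (alpha a b k) (alpha a b m)) := by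
  rw [← delta_alpha_assoc hab, delta_comm (alpha a b k), delta_alpha_assoc hab]

theorem delta_alpha_comp_of_eq (hab : a ≤ b)
    (h : delta (alpha a b k) (alpha a b l) = alpha a b m) (j : ℕ) :
    delta (alpha a b k) (delta (alpha a b l) (alpha a b j)) = delta (alpha a b m) (alpha a b j) ∧
      delta (alpha a b l) (delta (alpha a b k) (alpha a b j)) =
        delta (alpha a b m) (alpha a b j) := by
  rw [delta_alpha_left_comm hab l, and_self, ← delta_alpha_assoc hab, h]

theorem delta_alpha_congr_high (hab : a ≤ b) (hk : n ≤ a + k) (hl : n ≤ a + l) (j : ℕ) :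
    delta (alpha a b k) (alpha a b j) = delta (alpha a b l) (alpha a b j) := by
  rw [delta_alpha_high hab hk, delta_alpha_high hab hl]

theorem delta_alpha_comp_high (hab : a ≤ b) (hk : n ≤ a + k) (l j : ℕ) :
    delta (alpha a b k) (delta (alpha a b l) (alpha a b j)) = delta (alpha a b k) (alpha a b j) ∧
      delta (alpha a b l) (delta (alpha a b k) (alpha a b j)) =
        delta (alpha a b k) (alpha a b j) := by
  have hcomp := delta_alpha_comp_of_eq hab (delta_alpha_high hab hk l) j
  rwa [delta_alpha_congr_high hab (Nat.le_add_left n a) hk] at hcomp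

theorem delta_alpha_sub (hab : a < b) (hl : a + l < n) :
    delta (alpha a b (n - b)) (alpha a b l) = alpha a b l := by
  have hak : a + (n - b) < n := by omega
  have hbk : n ≤ b + (n - b) := by omega
  rcases lt_or_ge (b + l) n with hbl | hbl
  · rw [delta_comm, delta_alpha_low_middle hab.le hbl hak hbk]
  · rw [delta_alpha_middle_middle hab.le hak hbk hl hbl, max_eq_right (by omega)]

theorem delta_alpha_comp_sub (hab : a < b) (l j : ℕ) :
    delta (alpha a b (n - b)) (delta (alpha a b l) (alpha a b j)) =
        delta (alpha a b l) (alpha a b j) ∧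
      delta (alpha a b l) (delta (alpha a b (n - b)) (alpha a b j)) =
        delta (alpha a b l) (alpha a b j) := by
  rcases lt_or_ge (a + l) n with hl | hl
  · exact delta_alpha_comp_of_eq hab.le (delta_alpha_sub hab hl) j
  · exact (delta_alpha_comp_high hab.le hl (n - b) j).symm

theorem delta_alpha_min (hab : a ≤ b) (k j : ℕ) :
    delta (alpha a b (min k (n - a))) (alpha a b j) = delta (alpha a b k) (alpha a b j) := by
  rcases le_total k (n - a) with hk | hk
  · rw [min_eq_left hk]
  · rw [min_eq_right hk]
    exact delta_alpha_congr_high hab (by omega) (by omega) j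

theorem exists_delta_alpha_comp_eq (hab : a ≤ b) (k l : ℕ) :
    ∃ m ≤ n - a, ∀ j, delta (alpha a b k) (delta (alpha a b l) (alpha a b j)) =
      delta (alpha a b m) (alpha a b j) := by
  obtain ⟨m, hm⟩ := exists_delta_alpha_eq hab k l
  refine ⟨min m (n - a), min_le_right m _, fun j => ?_⟩
  rw [delta_alpha_min hab, ← delta_alpha_assoc hab, hm]

end StringOfTypeTwo

/-- The composition table of the maps `δ_{α_0},…,δ_{α_{n−a}}` as
maps of the string `STR{a,b}` (all equalities of maps of the string are stated
pointwise on the elements `α_j`, `0 ≤ j ≤ n`):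
(i) `δ_{α_ℓ} = δ_{α_{n−a}}` for `n−a ≤ ℓ ≤ n`;
(ii) `δ_{α_{n−b}}` is a neutral element for composition;
(iii) `δ_{α_{n−a}}` is an absorbing element;
(iv) `δ_{α_k} ∘ δ_{α_ℓ} = δ_{α_0}` for `k, ℓ ≤ n−b−1`;
(v) `δ_{α_k} ∘ δ_{α_ℓ} = δ_{α_ℓ} ∘ δ_{α_k} = δ_{α_k}` for `k ≤ n−b−1` and
`n−b ≤ ℓ ≤ n−a−1`;
(vi) `δ_{α_k} ∘ δ_{α_ℓ} = δ_{α_ℓ} ∘ δ_{α_k} = δ_{α_ℓ}` for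
`n−b ≤ k ≤ ℓ ≤ n−a−1`.
In particular `Δ = {δ_{α_0},…,δ_{α_{n−a}}}` is closed under composition and
composition on `Δ` is commutative. -/
theorem stmt9 (n : ℕ) (a b : Fin n) (hab : a < b) :
    -- (i)
    (∀ ℓ : ℕ, n - (a : ℕ) ≤ ℓ → ℓ ≤ n → ∀ j ≤ n,
      delta (alpha a b ℓ) (alpha a b j) = delta (alpha a b (n - (a : ℕ))) (alpha a b j)) ∧
    -- (ii) δ_{α_{n−b}} is neutral
    (∀ ℓ : ℕ, ℓ ≤ n - (a : ℕ) → ∀ j ≤ n,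
      delta (alpha a b (n - (b : ℕ))) (delta (alpha a b ℓ) (alpha a b j)) =
        delta (alpha a b ℓ) (alpha a b j) ∧
      delta (alpha a b ℓ) (delta (alpha a b (n - (b : ℕ))) (alpha a b j)) =
        delta (alpha a b ℓ) (alpha a b j)) ∧
    -- (iii) δ_{α_{n−a}} is absorbing
    (∀ ℓ : ℕ, ℓ ≤ n - (a : ℕ) → ∀ j ≤ n,
      delta (alpha a b (n - (a : ℕ))) (delta (alpha a b ℓ) (alpha a b j)) =
        delta (alpha a b (n - (a : ℕ))) (alpha a b j) ∧
      delta (alpha a b ℓ) (delta (alpha a b (n - (a : ℕ))) (alpha a b j)) =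
        delta (alpha a b (n - (a : ℕ))) (alpha a b j)) ∧
    -- (iv)
    (∀ k ℓ : ℕ, k ≤ n - (b : ℕ) - 1 → ℓ ≤ n - (b : ℕ) - 1 → ∀ j ≤ n,
      delta (alpha a b k) (delta (alpha a b ℓ) (alpha a b j)) =
        delta (alpha a b 0) (alpha a b j)) ∧
    -- (v)
    (∀ k ℓ : ℕ, k ≤ n - (b : ℕ) - 1 → n - (b : ℕ) ≤ ℓ → ℓ ≤ n - (a : ℕ) - 1 →
      ∀ j ≤ n,
      delta (alpha a b k) (delta (alpha a b ℓ) (alpha a b j)) =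
        delta (alpha a b k) (alpha a b j) ∧
      delta (alpha a b ℓ) (delta (alpha a b k) (alpha a b j)) =
        delta (alpha a b k) (alpha a b j)) ∧
    -- (vi)
    (∀ k ℓ : ℕ, n - (b : ℕ) ≤ k → k ≤ ℓ → ℓ ≤ n - (a : ℕ) - 1 → ∀ j ≤ n,
      delta (alpha a b k) (delta (alpha a b ℓ) (alpha a b j)) =
        delta (alpha a b ℓ) (alpha a b j) ∧
      delta (alpha a b ℓ) (delta (alpha a b k) (alpha a b j)) =
        delta (alpha a b ℓ) (alpha a b j)) ∧
    -- Δ is closed under composition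
    (∀ k ℓ : ℕ, k ≤ n - (a : ℕ) → ℓ ≤ n - (a : ℕ) →
      ∃ m ≤ n - (a : ℕ), ∀ j ≤ n,
        delta (alpha a b k) (delta (alpha a b ℓ) (alpha a b j)) =
          delta (alpha a b m) (alpha a b j)) ∧
    -- composition on Δ is commutative
    (∀ k ℓ : ℕ, k ≤ n - (a : ℕ) → ℓ ≤ n - (a : ℕ) → ∀ j ≤ n,
      delta (alpha a b k) (delta (alpha a b ℓ) (alpha a b j)) =
        delta (alpha a b ℓ) (delta (alpha a b k) (alpha a b j))) := by
  have hle := hab.le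
  refine ⟨fun ℓ hℓ _ j _ => delta_alpha_congr_high hle (by omega) (by omega) j,
    fun ℓ _ j _ => delta_alpha_comp_sub hab ℓ j,
    fun ℓ _ j _ => delta_alpha_comp_high hle (by omega) ℓ j,
    fun k ℓ hk hℓ j _ => ?_, fun k ℓ hk hℓ hℓ' j _ => ?_, fun k ℓ hk hkℓ hℓ j _ => ?_,
    fun k ℓ _ _ => ?_, fun k ℓ _ _ j _ => delta_alpha_left_comm hle k ℓ j⟩
  · exact (delta_alpha_comp_of_eq hle
      (delta_alpha_low_low hle (by omega) (by omega)) j).1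
  · exact delta_alpha_comp_of_eq hle
      (delta_alpha_low_middle hle (by omega) (by omega) (by omega)) j
  · have hmul : delta (alpha a b k) (alpha a b ℓ) = alpha a b ℓ := by
      rw [delta_alpha_middle_middle hle (by omega) (by omega) (by omega) (by omega),
        max_eq_right hkℓ]
    exact delta_alpha_comp_of_eq hle hmul j
  · obtain ⟨m, hm, hcomp⟩ := exists_delta_alpha_comp_eq hle k ℓ
    exact ⟨m, hm, fun j _ => hcomp j⟩
end
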